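/- For all p ≥ 0 and κ ∈ [0,1], the inequality R1A(p,κ) ≥ R̄ holds if and only if p²·a12²·((γ2+1)·(1−κ²) − 1) − 2·p·a12·(P1 − γ2) + γ2 + 1 − (1+P1)² ≤ 0. -/

import Mathlib

/-!
With `q = p·a12` the interference power at receiver 1, the denominator in the rate is the
determinant `(1 + q)² - (q κ)²` of the augmented covariance of interference plus noise. Thus
`R̄ ≤ R1A` says that `2^(2 R̄)` times this determinant is at most `(q + P1 + 1)²`. Since
`2^(2 R̄) = (1 + P1)^(2 α) = γ2 + 1`, this is a polynomial inequality in `q`, of degree two.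
-/

lemma rpow_mul_logb {b x : ℝ} (hb : 0 < b) (hb' : b ≠ 1) (hx : 0 < x) (t : ℝ) :
    b ^ (t * Real.logb b x) = x ^ t := by
  rw [mul_comm, Real.rpow_mul hb.le, Real.rpow_logb hb hb' hx]

/-- The determinant of the augmented covariance matrix of unit-variance circular noise plus
interference of received power `q` and circularity coefficient `κ`, arranged as in the denominator
of the rate; `interferenceDet_eq_sq_sub_sq` gives its usual form. -/
def interferenceDet (q κ : ℝ) : ℝ :=
  1 + q * (q * (1 - κ ^ 2) + 2)

/-- The rate `R1A` of user 1, transmitting with power `P` and circularity coefficient `κ1 < 1`,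
as a function of the received interference power `q = p·a12` instead of the transmit power `p`. -/
noncomputable def improperRate (P q κ : ℝ) : ℝ :=
  (1 / 2) * Real.logb 2 ((q + P + 1) ^ 2 / interferenceDet q κ)

section

variable {P q κ : ℝ}

lemma interferenceDet_eq_sq_sub_sq :
    interferenceDet q κ = (1 + q) ^ 2 - (q * κ) ^ 2 := by
  unfold interferenceDet
  ring

lemma interferenceDet_pos_iff : 0 < interferenceDet q κ ↔ |q * κ| < |1 + q| := by
  rw [interferenceDet_eq_sq_sub_sq, sub_pos, sq_lt_sq]

lemma interferenceDet_pos (hq : 0 ≤ q) (hκ : |κ| ≤ 1) : 0 < interferenceDet q κ := by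
  rw [interferenceDet_pos_iff]
  calc |q * κ| = q * |κ| := by rw [abs_mul, abs_of_nonneg hq]
    _ ≤ q := mul_le_of_le_one_right hq hκ
    _ < 1 + q := lt_one_add q
    _ ≤ |1 + q| := le_abs_self _

lemma le_improperRate_iff {R : ℝ} (hsignal : q + P + 1 ≠ 0) (hdet : 0 < interferenceDet q κ) :
    R ≤ improperRate P q κ ↔ 2 ^ (2 * R) * interferenceDet q κ ≤ (q + P + 1) ^ 2 := by
  have hratio : 0 < (q + P + 1) ^ 2 / interferenceDet q κ := by positivity
  calc R ≤ improperRate P q κ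
      ↔ 2 * R ≤ Real.logb 2 ((q + P + 1) ^ 2 / interferenceDet q κ) := by
        unfold improperRate
        constructor <;> intro h <;> linarith
    _ ↔ 2 ^ (2 * R) ≤ (q + P + 1) ^ 2 / interferenceDet q κ :=
        Real.le_logb_iff_rpow_le one_lt_two hratio
    _ ↔ 2 ^ (2 * R) * interferenceDet q κ ≤ (q + P + 1) ^ 2 := le_div_iff₀ hdet

lemma add_one_mul_interferenceDet_sub_sq {γ : ℝ} :
    (γ + 1) * interferenceDet q κ - (q + P + 1) ^ 2 =
      q ^ 2 * ((γ + 1) * (1 - κ ^ 2) - 1) - 2 * q * (P - γ) + γ + 1 - (1 + P) ^ 2 := by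
  unfold interferenceDet
  ring

end

theorem stmt3_general {P1 a12 α Rbar γ2 p κ : ℝ} (hP1 : -1 < P1)
    (hRbar : Rbar = α * Real.logb 2 (1 + P1)) (hγ2 : γ2 = (1 + P1) ^ (2 * α) - 1)
    (hsignal : p * a12 + P1 + 1 ≠ 0) (hdet : 0 < interferenceDet (p * a12) κ) :
    (1 / 2) * Real.logb 2
        ((p * a12 + P1 + 1) ^ 2
            / (1 + p * a12 * (p * a12 * (1 - κ ^ 2) + 2))) ≥ Rbar
      ↔ p ^ 2 * a12 ^ 2 * ((γ2 + 1) * (1 - κ ^ 2) - 1)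
          - 2 * p * a12 * (P1 - γ2) + γ2 + 1 - (1 + P1) ^ 2 ≤ 0 := by
  have hpow : (2 : ℝ) ^ (2 * Rbar) = γ2 + 1 := by
    rw [hRbar, hγ2, ← mul_assoc, rpow_mul_logb two_pos one_lt_two.ne' (by linarith),
      sub_add_cancel]
  change Rbar ≤ improperRate P1 (p * a12) κ ↔ _
  rw [le_improperRate_iff hsignal hdet, hpow, ← sub_nonpos,
    add_one_mul_interferenceDet_sub_sq, mul_pow, ← mul_assoc 2 p a12]

/-- For all `p ≥ 0` and `κ ∈ [0,1]`, the rate constraint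
`R1A(p,κ) ≥ R̄` (user 1's rate when its own circularity coefficient is < 1)
holds iff the quadratic inequality
`p²·a12²·((γ2+1)·(1−κ²) − 1) − 2·p·a12·(P1 − γ2) + γ2 + 1 − (1+P1)² ≤ 0` holds. -/
theorem stmt3 (P1 P2 a12 α Rbar γ1 γ2 : ℝ)
    (hP1 : 0 < P1) (hP2 : 0 < P2) (ha12 : 0 < a12) (hα : α ∈ Set.Ioo (0:ℝ) 1)
    (hRbar : Rbar = α * Real.logb 2 (1 + P1))
    (hγ1 : γ1 = (1 + P1) ^ α - 1) (hγ2 : γ2 = (1 + P1) ^ (2 * α) - 1) :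
    ∀ p κ : ℝ, 0 ≤ p → κ ∈ Set.Icc (0:ℝ) 1 →
      ((1 / 2) * Real.logb 2
          ((p * a12 + P1 + 1) ^ 2
              / (1 + p * a12 * (p * a12 * (1 - κ ^ 2) + 2))) ≥ Rbar
        ↔ p ^ 2 * a12 ^ 2 * ((γ2 + 1) * (1 - κ ^ 2) - 1)
            - 2 * p * a12 * (P1 - γ2) + γ2 + 1 - (1 + P1) ^ 2 ≤ 0) := by
  intro p κ hp hκ
  have hq : 0 ≤ p * a12 := mul_nonneg hp ha12.le
  exact stmt3_general (by linarith) hRbar hγ2 (by positivity)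
    (interferenceDet_pos hq (abs_le.2 ⟨by linarith [hκ.1], hκ.2⟩))
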